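/- Let ν₁, ν₂ be multiplicative characters of F_q, set χ₁ = ν₁⁴, χ₂ = ν₂⁴ and μ = ν₁ν₂. Then T(χ₁,χ₂) = (A₄(−a)/q) · Σ_{m=0}^{3} Σ_{n=0}^{3} (μ̄ A̅₄^{m+n})(a) · G(ν₁A₄^{n−1}) · G(ν₁A₄^{n}) · G(ν₂A₄^{m−1}) · G(ν₂A₄^{m}), where character powers A₄^{n} for negative n are interpreted via A₄^{−1} = A̅₄. -/

import Mathlib

/-!
Put `K(j) = ∑_{x ≠ 0} A₄(x) ψ(x + a j⁴/x)`. For `j, k ≠ 0`, Katz's identity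
`K(j) K(k) = q A₄(-a) P(j,k)` turns `T(χ₁, χ₂)` into a product of two Mellin transforms of `K`.
Since `K(j)` depends only on `j⁴`, and the characters `A₄ⁿ` detect fourth powers, the Mellin
transform of `K` at `ν⁴` is a sum over `n` modulo `4` of products of two Gauss sums.

To prove Katz's identity, express both sides through the Kloosterman sums
`Kl(α, β) = ∑_{x ≠ 0} ψ(αx + β/x)`, which depend only on `αβ` unless `α = β = 0`. Collecting the
terms of `K(j) K(k)` by the product `p` of the two summation variables, and then setting `p = -av`,
gives an average of Kloosterman sums against `A₄(v)` whose parameter depends only on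
`v + (jk)⁴/v`. Writing `G(φ) φ(a/x - x)` as `∑_y φ(y) ψ((a/x - x) y)` turns the sum in `P(j,k)` into
`∑_y φ(y) Kl((j+k)² - y, a((j-k)² + y))`. The two averages agree because
`∑_v A₄(v) g(v + n⁴/v) = ∑_y φ(y) g((y - 2n)² - 2n²)` for every function `g`, and the degenerate
sums `Kl(0, 0)` account for the delta terms.
-/

open Finset

noncomputable section

variable {F : Type} [Field F] [Fintype F] [DecidableEq F]

/-- Katz's mixed character sum `P(j,k)`; the quadratic character `φ` is `A₄ ^ 2`. -/
def Pkatz (ψ : AddChar F ℂ) (A₄ : MulChar F ℂ) (a : F) (j k : F) : ℂ :=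
  (if j = k then 1 else 0) + (A₄ ^ 2) (-1) * (if j = -k then 1 else 0) +
    (gaussSum (A₄ ^ 2) ψ)⁻¹ *
      ∑ x ∈ univ.filter (fun x : F => x ≠ 0),
        (A₄ ^ 2) (a / x - x) * ψ (x * (j + k) ^ 2 + (a / x) * (j - k) ^ 2)

/-- Katz's sums `V(j)`. -/
def Vkatz (ψ : AddChar F ℂ) (A₄ : MulChar F ℂ) (a : F) (τ : ℂ) (j : F) : ℂ :=
  if j = 0 then gaussSum A₄ ψ / τ + τ / gaussSum A₄ ψ
  else τ⁻¹ * ∑ x ∈ univ.filter (fun x : F => x ≠ 0), A₄ x * ψ (x + a * j ^ 4 / x)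

/-- The finite field hypergeometric function `₂F₁(A,B;C|x)`. -/
def hyp2F1 (A B C : MulChar F ℂ) (x : F) : ℂ :=
  ((1 : MulChar F ℂ) x / (Fintype.card F : ℂ)) *
    ∑ y : F, B y * (B⁻¹ * C) (y - 1) * A⁻¹ (1 - x * y)

/-- The Jacobi sum `J(A,B)`. -/
def Jsum (A B : MulChar F ℂ) : ℂ := ∑ y : F, A y * B (1 - y)

/-- The sum `h(D,j)`; the quadratic character `φ` is `A₄ ^ 2`. -/
def hKatz (A₄ D : MulChar F ℂ) (j : F) : ℂ :=
  ∑ x ∈ univ.filter (fun x : F => x ≠ 0),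
    D x * (A₄ ^ 2) (1 - x) * ((D⁻¹ ^ 2) * A₄ ^ 2) (x * (j + 1) ^ 2 + (j - 1) ^ 2)

/-- The sum `H(λ₁)`; the quadratic character `φ` is `A₄ ^ 2`. -/
def Hkatz (A₄ lam : MulChar F ℂ) (a : F) : ℂ :=
  ∑ p ∈ (univ ×ˢ univ).filter
      (fun p : F × F => p.1 ≠ 0 ∧ p.2 ≠ 0 ∧
        p.2 * (p.1 + 1) ^ 2 + a * (p.1 - 1) ^ 2 / p.2 = 0),
    (lam ^ 2 * A₄ ^ 2) p.1 * (A₄ ^ 2) (p.2 - a / p.2)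

/-- The Mellin transform `S(χ)` of the sums `V(j)`. -/
def Smel (ψ : AddChar F ℂ) (A₄ : MulChar F ℂ) (a : F) (τ : ℂ) (χ : MulChar F ℂ) : ℂ :=
  ∑ j ∈ univ.filter (fun j : F => j ≠ 0), χ j * Vkatz ψ A₄ a τ j

/-- The Mellin transform `T(χ)` of the sums `P(j,0)`. -/
def Tmel (ψ : AddChar F ℂ) (A₄ : MulChar F ℂ) (a : F) (χ : MulChar F ℂ) : ℂ :=
  ∑ j ∈ univ.filter (fun j : F => j ≠ 0), χ j * Pkatz ψ A₄ a j 0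

/-- The double Mellin transform `T(χ₁,χ₂)` of the sums `P(j,k)`. -/
def Tmel2 (ψ : AddChar F ℂ) (A₄ : MulChar F ℂ) (a : F) (χ₁ χ₂ : MulChar F ℂ) : ℂ :=
  ∑ j ∈ univ.filter (fun j : F => j ≠ 0), ∑ k ∈ univ.filter (fun k : F => k ≠ 0),
    χ₁ j * χ₂ k * Pkatz ψ A₄ a j k

end

section PowerResidues

theorem apply_pow_orderOf {M R : Type*} [CommMonoid M] [CommMonoidWithZero R] (χ : MulChar M R)
    {x : M} (hx : IsUnit x) : χ (x ^ orderOf χ) = 1 := by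
  obtain ⟨u, rfl⟩ := hx
  rw [map_pow, ← MulChar.pow_apply_coe, pow_orderOf_eq_one, MulChar.one_apply_coe]

theorem sum_filter_ne_zero_mul {M R : Type*} [CommMonoidWithZero M] [Nontrivial M] [Fintype M]
    [DecidableEq M] [CommSemiring R] (χ : MulChar M R) (f : M → R) :
    ∑ x with x ≠ 0, χ x * f x = ∑ x, χ x * f x := by
  refine sum_filter_of_ne fun x _ hx => ?_
  rintro rfl
  exact hx (by rw [MulChar.map_zero, zero_mul])

theorem orderOf_dvd_of_forall_mem_zpowers {M R : Type*} [CommMonoid M] [CommMonoidWithZero R]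
    {χ : MulChar M R} {g : Mˣ} (hg : ∀ u, u ∈ Subgroup.zpowers g) {k : ℕ} (hk : χ g ^ k = 1) :
    orderOf χ ∣ k := by
  refine orderOf_dvd_of_pow_eq_one ((MulChar.eq_iff hg _ _).2 ?_)
  rw [MulChar.pow_apply_coe, hk, MulChar.one_apply_coe]

variable {F R : Type*} [Field F] [CommRing R]

theorem exists_pow_orderOf_eq_of_apply_eq_one [Finite F] [Nontrivial R] (χ : MulChar F R) {t : F}
    (ht : χ t = 1) : ∃ r : F, r ^ orderOf χ = t := by
  have ht0 : t ≠ 0 := by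
    rintro rfl
    exact zero_ne_one ((MulChar.map_zero χ).symm.trans ht)
  obtain ⟨g, hg⟩ := IsCyclic.exists_generator (α := Fˣ)
  obtain ⟨k, hk⟩ := (mem_powers_iff_mem_zpowers).2 (hg (Units.mk0 t ht0))
  have hkt : (g : F) ^ k = t := congrArg Units.val hk
  obtain ⟨l, rfl⟩ : orderOf χ ∣ k :=
    orderOf_dvd_of_forall_mem_zpowers hg (by rw [← map_pow, hkt, ht])
  exact ⟨(g : F) ^ l, by rw [← pow_mul, mul_comm, hkt]⟩

variable [Fintype F]

theorem exists_isPrimitiveRoot_of_dvd_card_sub_one {n : ℕ} (hn : n ∣ Fintype.card F - 1) :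
    ∃ ζ : F, IsPrimitiveRoot ζ n := by
  classical
  obtain ⟨g, hg⟩ := IsCyclic.exists_ofOrder_eq_natCard (α := Fˣ)
  rw [Nat.card_eq_fintype_card, Fintype.card_units] at hg
  have hprim : IsPrimitiveRoot (g : F) (Fintype.card F - 1) :=
    IsPrimitiveRoot.coe_units_iff.2 (hg ▸ IsPrimitiveRoot.orderOf g)
  obtain ⟨m, hm⟩ := hn
  exact ⟨(g : F) ^ m, hprim.pow (Nat.sub_pos_of_lt Fintype.one_lt_card) (by rw [hm, mul_comm])⟩

theorem card_filter_pow_orderOf_eq [IsDomain R] [DecidableEq F] (χ : MulChar F R) {t : F}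
    (ht : t ≠ 0) :
    (#{e : F | e ^ orderOf χ = t} : R) = ∑ n ∈ range (orderOf χ), (χ ^ n) t := by
  have hd : 0 < orderOf χ := χ.orderOf_pos
  obtain ⟨ζ, hζ⟩ :=
    exists_isPrimitiveRoot_of_dvd_card_sub_one (MulChar.orderOf_dvd_card_sub_one F χ)
  have hpow (n : ℕ) : (χ ^ n) t = χ t ^ n := χ.pow_apply_coe n (Units.mk0 t ht)
  have hcard : #{e : F | e ^ orderOf χ = t} = (Polynomial.nthRoots (orderOf χ) t).card := by
    rw [← Multiset.toFinset_card_of_nodup (hζ.nthRoots_nodup ht)]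
    congr 1
    ext e
    simp only [mem_filter_univ, Multiset.mem_toFinset, Polynomial.mem_nthRoots hd]
  rw [hcard, hζ.card_nthRoots]
  simp only [hpow]
  by_cases h : χ t = 1
  · simp only [exists_pow_orderOf_eq_of_apply_eq_one χ h, h, one_pow, sum_const, card_range,
      if_true, nsmul_one]
  · have hroot : ¬∃ r, r ^ orderOf χ = t := by
      rintro ⟨r, rfl⟩
      exact h (apply_pow_orderOf χ ((pow_ne_zero_iff hd.ne').1 ht).isUnit)
    have hgeom := mul_neg_geom_sum (χ t) (orderOf χ)
    rw [← hpow, pow_orderOf_eq_one, MulChar.one_apply ht.isUnit, sub_self] at hgeom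
    rw [if_neg hroot, Nat.cast_zero,
      (mul_eq_zero.1 hgeom).resolve_left (sub_ne_zero.2 (Ne.symm h))]

theorem sum_pow_orderOf_mul_comp_pow [IsDomain R] (ν χ : MulChar F R) (h : F → R) :
    ∑ x, (ν ^ orderOf χ) x * h (x ^ orderOf χ) =
      ∑ n ∈ range (orderOf χ), ∑ t, (ν * χ ^ n) t * h t := by
  classical
  have hd : orderOf χ ≠ 0 := χ.orderOf_pos.ne'
  calc ∑ x, (ν ^ orderOf χ) x * h (x ^ orderOf χ)
      = ∑ x, ν (x ^ orderOf χ) * h (x ^ orderOf χ) := by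
        simp only [ν.pow_apply' hd, map_pow]
    _ = ∑ t, (#{x : F | x ^ orderOf χ = t} : R) * (ν t * h t) := by
        simp only [← sum_fiberwise univ (· ^ orderOf χ) (fun x => ν (x ^ orderOf χ) * _),
          ← nsmul_eq_mul]
        refine sum_congr rfl fun t _ => sum_eq_card_nsmul fun x hx => ?_
        rw [(mem_filter.1 hx).2]
    _ = ∑ t, ∑ n ∈ range (orderOf χ), (ν * χ ^ n) t * h t := by
        refine sum_congr rfl fun t _ => ?_
        rcases eq_or_ne t 0 with rfl | ht
        · simp only [MulChar.map_zero, zero_mul, mul_zero, sum_const_zero]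
        · rw [card_filter_pow_orderOf_eq χ ht, sum_mul]
          exact sum_congr rfl fun n _ => by rw [MulChar.mul_apply]; ring
    _ = _ := sum_comm

end PowerResidues

section QuadraticCharacter

theorem sq_apply_neg_one {S R : Type*} [CommRing S] [CommMonoidWithZero R] (χ : MulChar S R) :
    (χ ^ 2) (-1) = 1 := by
  rw [χ.pow_apply' two_ne_zero, ← map_pow, neg_one_sq, map_one]

theorem domain_two_ne_zero_of_orderOf_eq_two {F R : Type*} [Field F] [Finite F] [CommRing R]
    {φ : MulChar F R} (hφ : orderOf φ = 2) : (2 : F) ≠ 0 := by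
  cases nonempty_fintype F
  refine Ring.two_ne_zero fun hchar => ?_
  have heven := FiniteField.even_card_of_char_two hchar
  have hdvd := hφ ▸ MulChar.orderOf_dvd_card_sub_one F φ
  have hpos := Fintype.card_pos (α := F)
  omega

theorem codomain_two_ne_zero_of_orderOf_eq_two {M R : Type*} [CommMonoid M] [CommRing R]
    [IsDomain R] {φ : MulChar M R} (hφ : orderOf φ = 2) : (2 : R) ≠ 0 := by
  intro h2
  have hone : φ = 1 := MulChar.ext fun u => by
    have hsq : φ u ^ 2 = 1 := by
      rw [← map_pow]
      exact hφ ▸ apply_pow_orderOf φ u.isUnit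
    rw [MulChar.one_apply_coe, ← sub_eq_zero, ← sq_eq_zero_iff]
    linear_combination hsq + (1 - φ u) * h2
  rw [hone, orderOf_one] at hφ
  omega

variable {F R : Type*} [Field F] [Fintype F] [CommRing R] [IsDomain R]

theorem card_filter_sq_eq [DecidableEq F] {φ : MulChar F R} (hφ : orderOf φ = 2) (d : F) :
    (#{e : F | e ^ 2 = d} : R) = 1 + φ d := by
  rcases eq_or_ne d 0 with rfl | hd
  · simp only [sq_eq_zero_iff, filter_eq', mem_univ, if_true, card_singleton, Nat.cast_one,
      MulChar.map_zero, add_zero]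
  · have h := hφ ▸ card_filter_pow_orderOf_eq φ hd
    rw [h, sum_range_succ, sum_range_one, pow_zero, pow_one, MulChar.one_apply hd.isUnit]

theorem card_filter_add_div_eq [DecidableEq F] {φ : MulChar F R} (hφ : orderOf φ = 2) {m : F}
    (hm : m ≠ 0) (z : F) :
    (#{u : F | u ≠ 0 ∧ u + m / u = z} : R) = 1 + φ (z ^ 2 - 4 * m) := by
  have h2 := domain_two_ne_zero_of_orderOf_eq_two hφ
  rw [← card_filter_sq_eq hφ]
  congr 1
  refine card_bij' (fun u _ => 2 * u - z) (fun e _ => (z + e) / 2) ?_ ?_ ?_ ?_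
  · simp only [mem_filter_univ]
    rintro u ⟨hu, rfl⟩
    field_simp
    ring
  · simp only [mem_filter_univ]
    intro e he
    have hprod : (z + e) * (z - e) = 4 * m := by linear_combination -he
    have hne : z + e ≠ 0 := by
      intro h0
      refine mul_ne_zero (mul_ne_zero h2 h2) hm ?_
      linear_combination (z - e) * h0 - hprod
    refine ⟨div_ne_zero hne h2, ?_⟩
    field_simp
    linear_combination -hprod
  · intro u _
    field_simp
    ring
  · intro e _
    field_simp
    ring

theorem sum_filter_add_sq_div_eq [DecidableEq F] {φ : MulChar F R} (hφ : orderOf φ = 2) {n : F}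
    (hn : n ≠ 0) (z : F) :
    ∑ u with u ≠ 0 ∧ u + n ^ 2 / u = z, φ u = φ (z + 2 * n) + φ (z - 2 * n) := by
  have h2 := domain_two_ne_zero_of_orderOf_eq_two hφ
  have hsq {x : F} (hx : x ≠ 0) : φ (x ^ 2) = 1 := hφ ▸ apply_pow_orderOf φ hx.isUnit
  rcases eq_or_ne (z + 2 * n) 0 with hz | hz
  · obtain rfl : z = -(2 * n) := eq_neg_of_add_eq_zero_left hz
    have hfiber : ({u : F | u ≠ 0 ∧ u + n ^ 2 / u = -(2 * n)} : Finset F) = {-n} := by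
      ext u
      simp only [mem_filter_univ, mem_singleton]
      constructor
      · rintro ⟨hu, h⟩
        have hun : (u + n) ^ 2 = 0 := by
          field_simp at h
          linear_combination h
        exact eq_neg_of_add_eq_zero_left (pow_eq_zero_iff two_ne_zero |>.1 hun)
      · rintro rfl
        refine ⟨neg_ne_zero.2 hn, ?_⟩
        field_simp
        ring
    rw [hfiber, sum_singleton, hz, MulChar.map_zero, zero_add,
      show -(2 * n) - 2 * n = 2 ^ 2 * -n by ring, map_mul, hsq h2, one_mul]
  · have hconst : ∀ u ∈ ({u : F | u ≠ 0 ∧ u + n ^ 2 / u = z} : Finset F), φ u = φ (z + 2 * n) := by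
      intro u hu
      obtain ⟨hu0, rfl⟩ := (mem_filter.1 hu).2
      have hfactor : u * (u + n ^ 2 / u + 2 * n) = (u + n) ^ 2 := by
        field_simp
        ring
      have hu2 : u + n ≠ 0 := fun h0 =>
        mul_ne_zero hu0 hz (by rw [hfactor, h0, zero_pow two_ne_zero])
      calc φ u = φ (u * (u + n ^ 2 / u + 2 * n) ^ 2) := by rw [map_mul, hsq hz, mul_one]
        _ = φ ((u + n) ^ 2 * (u + n ^ 2 / u + 2 * n)) := by rw [← hfactor]; ring_nf
        _ = φ (u + n ^ 2 / u + 2 * n) := by rw [map_mul, hsq hu2, one_mul]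
    rw [sum_congr rfl hconst, sum_const, nsmul_eq_mul, card_filter_add_div_eq hφ (pow_ne_zero 2 hn)]
    have hfactor : (z + 2 * n) ^ 2 * (z - 2 * n) = (z + 2 * n) * (z ^ 2 - 4 * n ^ 2) := by ring
    rw [add_mul, one_mul, mul_comm (φ (z ^ 2 - _)), ← map_mul, ← hfactor, map_mul, hsq hz, one_mul]

theorem sum_quadratic_mul_comp_add_div {φ : MulChar F R} (hφ : orderOf φ = 2) {n : F}
    (hn : n ≠ 0) (g : F → R) :
    ∑ u, φ u * g (u + n ^ 2 / u) = ∑ z, (φ (z + 2 * n) + φ (z - 2 * n)) * g z := by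
  classical
  rw [← sum_filter_ne_zero_mul, ← sum_fiberwise _ (fun u => u + n ^ 2 / u)]
  refine sum_congr rfl fun z _ => ?_
  rw [← sum_filter_add_sq_div_eq hφ hn, filter_filter, sum_mul]
  exact sum_congr rfl fun u hu => by rw [(mem_filter.1 hu).2.2]

theorem sum_quadratic_mul_mulShift {φ : MulChar F R} (hφ : orderOf φ = 2) (ψ : AddChar F R)
    (z : F) : ∑ y, φ y * ψ (z * y) = φ z * gaussSum φ ψ := by
  rcases eq_or_ne z 0 with rfl | hz
  · have hne : φ ≠ 1 := mt orderOf_eq_one_iff.2 (by omega)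
    simp only [zero_mul, AddChar.map_zero_eq_one, mul_one, MulChar.map_zero,
      MulChar.sum_eq_zero_of_ne_one hne]
  · have hinv : φ⁻¹ = φ := inv_eq_of_mul_eq_one_left <| by
      rw [← sq, orderOf_dvd_iff_pow_eq_one.1 hφ.dvd]
    exact (gaussSum_mulShift_eq φ ψ (Units.mk0 z hz)).trans (by rw [hinv, Units.val_mk0])

theorem ite_pow_four_eq_pow_four {F R : Type*} [Field F] [Finite F] [DecidableEq F]
    [CommRing R] {φ : MulChar F R} (hφ : orderOf φ = 2) {j : F} (hj : j ≠ 0) (k : F) (q : R) :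
    (if j ^ 4 = k ^ 4 then q else 0) =
      (if j = k then q else 0) + (if j = -k then q else 0) +
        φ ((j + k) ^ 2) * if (j + k) ^ 2 + (j - k) ^ 2 = 0 then q else 0 := by
  have h2 := domain_two_ne_zero_of_orderOf_eq_two hφ
  have h4j : (2 * j) ^ 2 ≠ 0 := pow_ne_zero 2 (mul_ne_zero h2 hj)
  rcases eq_or_ne j k with rfl | hjk
  · have hneg : j ≠ -j := fun h => mul_ne_zero h2 hj (by linear_combination h)
    have hsum : (j + j) ^ 2 + (j - j) ^ 2 ≠ 0 := by
      convert h4j using 1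
      ring
    rw [if_pos rfl, if_pos rfl, if_neg hneg, if_neg hsum, mul_zero, add_zero, add_zero]
  rw [if_neg hjk, zero_add]
  rcases eq_or_ne j (-k) with hjk' | hjk'
  · obtain rfl : k = -j := by rw [hjk', neg_neg]
    have hsum : (j + -j) ^ 2 + (j - -j) ^ 2 ≠ 0 := by
      convert h4j using 1
      ring
    rw [if_pos (by ring), if_pos hjk', if_neg hsum, mul_zero, add_zero]
  · have hadd : j + k ≠ 0 := fun h => hjk' (eq_neg_of_add_eq_zero_left h)
    have hiff : j ^ 4 = k ^ 4 ↔ (j + k) ^ 2 + (j - k) ^ 2 = 0 := by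
      have hfactor : 2 * (j ^ 4 - k ^ 4) =
          (j - k) * (j + k) * ((j + k) ^ 2 + (j - k) ^ 2) := by ring
      rw [← sub_eq_zero, ← mul_eq_zero_iff_left h2, hfactor,
        mul_eq_zero_iff_left (mul_ne_zero (sub_ne_zero.2 hjk) hadd)]
    rw [if_neg hjk', zero_add, if_congr hiff rfl rfl, ← hφ, apply_pow_orderOf φ hadd.isUnit,
      one_mul]

end QuadraticCharacter

section QuarticCharacter

theorem orderOf_sq_eq_two {G : Type*} [Monoid G] {g : G} (hg : orderOf g = 4) :
    orderOf (g ^ 2) = 2 := by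
  rw [orderOf_pow_of_dvd two_ne_zero (hg ▸ Nat.dvd_of_mod_eq_zero rfl), hg]

variable {F R : Type*} [Field F] [Fintype F] [CommRing R] [IsDomain R]

theorem two_mul_sum_quartic_mul_comp_add_div {A : MulChar F R} (hA : orderOf A = 4) {n : F}
    (hn : n ≠ 0) (h : F → R) :
    2 * ∑ v, A v * h (v + n ^ 4 / v) = ∑ x, (A ^ 2) x * h (x ^ 2 + n ^ 4 / x ^ 2) := by
  have hinv : A * A ^ 2 = A⁻¹ := eq_inv_of_mul_eq_one_left <| by
    rw [← pow_succ', ← pow_succ]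
    exact orderOf_dvd_iff_pow_eq_one.1 hA.dvd
  have hn4 : n ^ 4 ≠ 0 := pow_ne_zero 4 hn
  have hswap : ∑ v, A⁻¹ v * h (v + n ^ 4 / v) = ∑ v, A v * h (v + n ^ 4 / v) := by
    -- `v ↦ n ^ 4 / v` exchanges `A` and `A⁻¹ = A ^ 3`, the two characters with square `A ^ 2`.
    rw [← Equiv.sum_comp ((Equiv.inv F).trans (Equiv.mulLeft₀ (n ^ 4) hn4)) fun v => A v * _]
    refine sum_congr rfl fun v _ => ?_
    have hAn : A (n ^ 4) = 1 := hA ▸ apply_pow_orderOf A hn.isUnit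
    rw [Equiv.trans_apply, Equiv.inv_apply, Equiv.mulLeft₀_apply, map_mul, hAn, one_mul,
      MulChar.inv_apply', div_mul_cancel_left₀ hn4, inv_inv, add_comm, div_eq_mul_inv]
  have hpow := sum_pow_orderOf_mul_comp_pow A (A ^ 2) fun v => h (v + n ^ 4 / v)
  rw [orderOf_sq_eq_two hA, sum_range_succ, sum_range_one, pow_zero, mul_one, pow_one, hinv,
    hswap] at hpow
  rw [hpow, two_mul]

theorem sum_quartic_mul_comp_add_div {A : MulChar F R} (hA : orderOf A = 4) {n : F}
    (hn : n ≠ 0) (g : F → R) :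
    ∑ v, A v * g (v + n ^ 4 / v) = ∑ y, (A ^ 2) y * g ((y - 2 * n) ^ 2 - 2 * n ^ 2) := by
  have hφ := orderOf_sq_eq_two hA
  have hreflect : ∑ z, (A ^ 2) (z - 2 * n) * g (z ^ 2 - 2 * n ^ 2) =
      ∑ z, (A ^ 2) (z + 2 * n) * g (z ^ 2 - 2 * n ^ 2) := by
    rw [← Equiv.sum_comp (Equiv.neg F)]
    refine sum_congr rfl fun z _ => ?_
    rw [Equiv.neg_apply, neg_sq, ← neg_add', ← neg_one_mul, map_mul, sq_apply_neg_one, one_mul]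
  refine mul_left_cancel₀ (codomain_two_ne_zero_of_orderOf_eq_two hφ) ?_
  calc 2 * ∑ v, A v * g (v + n ^ 4 / v)
      = ∑ x, (A ^ 2) x * g (x ^ 2 + n ^ 4 / x ^ 2) := two_mul_sum_quartic_mul_comp_add_div hA hn g
    _ = ∑ x, (A ^ 2) x * g ((x + n ^ 2 / x) ^ 2 - 2 * n ^ 2) := by
        refine sum_congr rfl fun x _ => ?_
        rcases eq_or_ne x 0 with rfl | hx
        · simp only [MulChar.map_zero, zero_mul]
        · congr 2
          field_simp
          ring
    _ = ∑ z, ((A ^ 2) (z + 2 * n) + (A ^ 2) (z - 2 * n)) * g (z ^ 2 - 2 * n ^ 2) :=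
        sum_quadratic_mul_comp_add_div hφ hn fun z => g (z ^ 2 - 2 * n ^ 2)
    _ = 2 * ∑ z, (A ^ 2) (z + 2 * n) * g (z ^ 2 - 2 * n ^ 2) := by
        simp only [add_mul, sum_add_distrib, hreflect, ← two_mul]
    _ = 2 * ∑ y, (A ^ 2) y * g ((y - 2 * n) ^ 2 - 2 * n ^ 2) := by
        rw [← Equiv.sum_comp (Equiv.addRight (2 * n)) fun y => (A ^ 2) y * _]
        simp only [Equiv.coe_addRight, add_sub_cancel_right]

end QuarticCharacter

section KloostermanSum

variable {F R : Type*} [Field F] [Fintype F] [CommRing R]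

/-- The twisted Kloosterman sum `∑ x ≠ 0, χ(x) ψ(α x + β / x)`. Either parameter may vanish, so that
Gauss sums are included; the term at `x = 0` drops out because `χ 0 = 0`. -/
def kloostermanSum (χ : MulChar F R) (ψ : AddChar F R) (α β : F) : R :=
  ∑ x, χ x * ψ (α * x + β / x)

theorem kloostermanSum_eq_mul_one_left (χ : MulChar F R) (ψ : AddChar F R) {α : F} (hα : α ≠ 0)
    (β : F) : kloostermanSum χ ψ α β = χ⁻¹ α * kloostermanSum χ ψ 1 (α * β) := by
  unfold kloostermanSum
  rw [mul_sum, ← Equiv.sum_comp (Equiv.mulLeft₀ α hα) fun x => χ⁻¹ α * _]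
  refine sum_congr rfl fun x _ => ?_
  rw [Equiv.mulLeft₀_apply, map_mul, ← mul_assoc, ← mul_assoc, ← MulChar.mul_apply, inv_mul_cancel,
    MulChar.one_apply hα.isUnit, one_mul, one_mul, mul_div_mul_left _ _ hα]

theorem kloostermanSum_swap (χ : MulChar F R) (ψ : AddChar F R) (α β : F) :
    kloostermanSum χ ψ α β = kloostermanSum χ⁻¹ ψ β α := by
  unfold kloostermanSum
  rw [← Equiv.sum_comp (Equiv.inv F)]
  refine sum_congr rfl fun x _ => ?_
  rw [Equiv.inv_apply, MulChar.inv_apply', div_inv_eq_mul, ← div_eq_mul_inv, add_comm]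

theorem kloostermanSum_one_eq_add_ite [IsDomain R] [DecidableEq F] {ψ : AddChar F R} (hψ : ψ ≠ 1)
    (α β : F) :
    kloostermanSum 1 ψ α β =
      kloostermanSum 1 ψ 1 (α * β) + if α = 0 ∧ β = 0 then (Fintype.card F : R) else 0 := by
  have hleft {α : F} (hα : α ≠ 0) (β : F) :
      kloostermanSum 1 ψ α β = kloostermanSum 1 ψ 1 (α * β) := by
    rw [kloostermanSum_eq_mul_one_left 1 ψ hα, inv_one, MulChar.one_apply hα.isUnit, one_mul]
  by_cases hα : α = 0
  · by_cases hβ : β = 0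
    · have hzero : kloostermanSum 1 ψ 0 0 = (Fintype.card F : R) - 1 := by
        simp only [kloostermanSum, zero_mul, zero_div, add_zero, AddChar.map_zero_eq_one, mul_one]
        rw [MulChar.sum_one_eq_card_units, Fintype.card_units, Nat.cast_sub Fintype.card_pos,
          Nat.cast_one]
      have hone : kloostermanSum 1 ψ 1 0 = -1 := by
        rw [← gaussSum_one_left hψ]
        simp only [kloostermanSum, gaussSum, one_mul, zero_div, add_zero]
      rw [hα, hβ, zero_mul, hzero, hone, if_pos ⟨rfl, rfl⟩]
      ring
    · rw [if_neg (fun h => hβ h.2), add_zero, kloostermanSum_swap, inv_one, hleft hβ, mul_comm]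
  · rw [if_neg (fun h => hα h.1), add_zero, hleft hα]

theorem kloostermanSum_mul_kloostermanSum (χ : MulChar F R) (ψ : AddChar F R) (α β : F) :
    kloostermanSum χ ψ 1 α * kloostermanSum χ ψ 1 β =
      ∑ p, χ p * kloostermanSum 1 ψ (1 + β / p) (p + α) := by
  have hinner (x : F) :
      ∑ y, χ x * ψ (1 * x + α / x) * (χ y * ψ (1 * y + β / y)) =
        ∑ p, χ p * ((1 : MulChar F R) x * ψ ((1 + β / p) * x + (p + α) / x)) := by
    rcases eq_or_ne x 0 with rfl | hx
    · simp only [MulChar.map_zero, zero_mul, mul_zero]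
    rw [← Equiv.sum_comp (Equiv.mulLeft₀ x hx) fun p => χ p * _]
    refine sum_congr rfl fun y _ => ?_
    simp only [Equiv.mulLeft₀_apply]
    rcases eq_or_ne y 0 with rfl | hy
    · simp only [mul_zero, MulChar.map_zero, zero_mul]
    rw [MulChar.one_apply hx.isUnit, one_mul (ψ _), mul_mul_mul_comm, ← map_mul,
      ← AddChar.map_add_eq_mul]
    refine congrArg (χ (x * y) * ψ ·) ?_
    field_simp
    ring
  calc kloostermanSum χ ψ 1 α * kloostermanSum χ ψ 1 β
      = ∑ x, ∑ y, χ x * ψ (1 * x + α / x) * (χ y * ψ (1 * y + β / y)) := sum_mul_sum ..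
    _ = ∑ p, ∑ x, χ p * ((1 : MulChar F R) x * ψ ((1 + β / p) * x + (p + α) / x)) := by
        simp only [hinner]
        exact sum_comm
    _ = _ := by simp only [kloostermanSum, mul_sum]

theorem kloostermanSum_mul_kloostermanSum_eq_add_ite [IsDomain R] [DecidableEq F]
    (χ : MulChar F R) {ψ : AddChar F R} (hψ : ψ ≠ 1) (α β : F) :
    kloostermanSum χ ψ 1 α * kloostermanSum χ ψ 1 β =
      ∑ p, χ p * kloostermanSum 1 ψ 1 (p + α + β + α * β / p) +
        χ (-α) * if α = β then (Fintype.card F : R) else 0 := by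
  have hterm (p : F) :
      χ p * kloostermanSum 1 ψ (1 + β / p) (p + α) =
        χ p * kloostermanSum 1 ψ 1 (p + α + β + α * β / p) +
          if p = -α then χ p * if α = β then (Fintype.card F : R) else 0 else 0 := by
    rcases eq_or_ne p 0 with rfl | hp
    · simp only [MulChar.map_zero, zero_mul, add_zero, ite_self]
    have hprod : (1 + β / p) * (p + α) = p + α + β + α * β / p := by
      field_simp
      ring
    have hdegenerate : 1 + β / p = 0 ∧ p + α = 0 ↔ p = -α ∧ α = β := by
      rw [one_add_div hp, div_eq_zero_iff, or_iff_left hp, ← eq_neg_iff_add_eq_zero,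
        ← eq_neg_iff_add_eq_zero, and_comm]
      exact and_congr_right fun h => by rw [h, neg_inj]
    rw [kloostermanSum_one_eq_add_ite hψ, hprod, mul_add, if_congr hdegenerate rfl rfl, ite_and,
      mul_ite, mul_zero]
  rw [kloostermanSum_mul_kloostermanSum, sum_congr rfl fun p _ => hterm p, sum_add_distrib,
    sum_ite_eq' univ, if_pos (mem_univ _)]

theorem gaussSum_mul_sum_eq_sum_mul_kloostermanSum [IsDomain R] [DecidableEq F] {φ : MulChar F R}
    (hφ : orderOf φ = 2) (ψ : AddChar F R) (a s d : F) :
    gaussSum φ ψ * ∑ x with x ≠ 0, φ (a / x - x) * ψ (x * s + a / x * d) =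
      ∑ y, φ y * kloostermanSum 1 ψ (s - y) (a * (d + y)) := by
  have hsupp (f : F → R) : ∑ x with x ≠ 0, f x = ∑ x, (1 : MulChar F R) x * f x := by
    rw [← sum_filter_ne_zero_mul]
    refine sum_congr rfl fun x hx => ?_
    rw [MulChar.one_apply (mem_filter.1 hx).2.isUnit, one_mul]
  simp only [hsupp, kloostermanSum, mul_sum]
  rw [sum_comm]
  refine sum_congr rfl fun x _ => ?_
  calc gaussSum φ ψ * ((1 : MulChar F R) x * (φ (a / x - x) * ψ (x * s + a / x * d)))
      = (1 : MulChar F R) x * ψ (x * s + a / x * d) * ∑ y, φ y * ψ ((a / x - x) * y) := by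
        rw [sum_quadratic_mul_mulShift hφ]
        ring
    _ = ∑ y, φ y * ((1 : MulChar F R) x * ψ ((s - y) * x + a * (d + y) / x)) := by
        rw [mul_sum]
        refine sum_congr rfl fun y _ => ?_
        rw [show (s - y) * x + a * (d + y) / x = (x * s + a / x * d) + (a / x - x) * y by ring,
          AddChar.map_add_eq_mul ψ (x * s + a / x * d)]
        ring

theorem gaussSum_mul_sum_eq_add_ite [IsDomain R] [DecidableEq F] {φ : MulChar F R}
    (hφ : orderOf φ = 2) {ψ : AddChar F R} (hψ : ψ ≠ 1) {a : F} (ha : a ≠ 0) (s d : F) :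
    gaussSum φ ψ * ∑ x with x ≠ 0, φ (a / x - x) * ψ (x * s + a / x * d) =
      ∑ y, φ y * kloostermanSum 1 ψ 1 (a * ((s - y) * (d + y))) +
        φ s * if s + d = 0 then (Fintype.card F : R) else 0 := by
  have hterm (y : F) :
      φ y * kloostermanSum 1 ψ (s - y) (a * (d + y)) =
        φ y * kloostermanSum 1 ψ 1 (a * ((s - y) * (d + y))) +
          if s = y then φ y * if s + d = 0 then (Fintype.card F : R) else 0 else 0 := by
    have hdegenerate : s - y = 0 ∧ a * (d + y) = 0 ↔ s = y ∧ s + d = 0 := by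
      rw [sub_eq_zero, mul_eq_zero, or_iff_right ha, add_comm d]
      exact and_congr_right fun h => by rw [h]
    rw [kloostermanSum_one_eq_add_ite hψ, mul_left_comm, mul_add, if_congr hdegenerate rfl rfl,
      ite_and, mul_ite, mul_zero]
  rw [gaussSum_mul_sum_eq_sum_mul_kloostermanSum hφ, sum_congr rfl fun y _ => hterm y,
    sum_add_distrib, sum_ite_eq univ, if_pos (mem_univ _)]

theorem kloostermanSum_mul_kloostermanSum_of_orderOf_eq_four [IsDomain R] [DecidableEq F]
    {A : MulChar F R} (hA : orderOf A = 4) {ψ : AddChar F R} (hψ : ψ ≠ 1) {a j k : F} (ha : a ≠ 0)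
    (hj : j ≠ 0) (hk : k ≠ 0) :
    kloostermanSum A ψ 1 (a * j ^ 4) * kloostermanSum A ψ 1 (a * k ^ 4) =
      A (-a) * (∑ y, (A ^ 2) y *
          kloostermanSum 1 ψ 1 (a * (((j + k) ^ 2 - y) * ((j - k) ^ 2 + y))) +
        if j ^ 4 = k ^ 4 then (Fintype.card F : R) else 0) := by
  have hjk : j * k ≠ 0 := mul_ne_zero hj hk
  have hAj : A (j ^ 4) = 1 := hA ▸ apply_pow_orderOf A hj.isUnit
  have hrescale (p : F) : -a * p + a * j ^ 4 + a * k ^ 4 + a * j ^ 4 * (a * k ^ 4) / (-a * p) =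
      a * (j ^ 4 + k ^ 4 - (p + (j * k) ^ 4 / p)) := by
    rcases eq_or_ne p 0 with rfl | hp
    · simp only [mul_zero, div_zero]
      ring
    · field_simp
      ring
  have hfactor (y : F) : j ^ 4 + k ^ 4 - ((y - 2 * (j * k)) ^ 2 - 2 * (j * k) ^ 2) =
      ((j + k) ^ 2 - y) * ((j - k) ^ 2 + y) := by ring
  rw [kloostermanSum_mul_kloostermanSum_eq_add_ite A hψ, mul_add, ← neg_mul, map_mul A (-a) (j ^ 4),
    hAj, mul_one]
  simp only [mul_right_inj' ha]
  congr 1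
  calc ∑ p, A p * kloostermanSum 1 ψ 1
          (p + a * j ^ 4 + a * k ^ 4 + a * j ^ 4 * (a * k ^ 4) / p)
      = A (-a) * ∑ v, A v *
          kloostermanSum 1 ψ 1 (a * (j ^ 4 + k ^ 4 - (v + (j * k) ^ 4 / v))) := by
        rw [mul_sum, ← Equiv.sum_comp (Equiv.mulLeft₀ (-a) (neg_ne_zero.2 ha))]
        refine sum_congr rfl fun v _ => ?_
        rw [Equiv.mulLeft₀_apply, hrescale, map_mul, mul_assoc]
    _ = _ := by
        rw [sum_quartic_mul_comp_add_div hA hjk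
          fun w => kloostermanSum 1 ψ 1 (a * (j ^ 4 + k ^ 4 - w))]
        simp only [hfactor]

end KloostermanSum

section MellinTransform

variable {F R : Type*} [Field F] [Fintype F] [CommRing R]

theorem sum_mul_kloostermanSum (χ η : MulChar F R) (ψ : AddChar F R) {a : F} (ha : a ≠ 0) :
    ∑ t, χ t * kloostermanSum η ψ 1 (a * t) =
      χ⁻¹ a * (gaussSum χ ψ * gaussSum (χ * η) ψ) := by
  have hinner {x : F} (hx : x ≠ 0) :
      ∑ t, χ t * ψ (a / x * t) = χ⁻¹ a * χ x * gaussSum χ ψ := by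
    have hinv : χ⁻¹ (a / x) = χ⁻¹ a * χ x := by
      rw [div_eq_mul_inv, map_mul, MulChar.inv_apply' χ x⁻¹, inv_inv]
    rw [← hinv]
    exact gaussSum_mulShift_eq χ ψ (Units.mk0 (a / x) (div_ne_zero ha hx))
  calc ∑ t, χ t * kloostermanSum η ψ 1 (a * t)
      = ∑ x, η x * ψ x * ∑ t, χ t * ψ (a / x * t) := by
        simp only [kloostermanSum, mul_sum]
        rw [sum_comm]
        refine sum_congr rfl fun x _ => sum_congr rfl fun t _ => ?_
        rw [one_mul, mul_div_right_comm, AddChar.map_add_eq_mul]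
        ring
    _ = ∑ x, χ⁻¹ a * gaussSum χ ψ * ((χ * η) x * ψ x) := by
        refine sum_congr rfl fun x _ => ?_
        rcases eq_or_ne x 0 with rfl | hx
        · simp only [MulChar.map_zero, zero_mul, mul_zero]
        · rw [hinner hx, MulChar.mul_apply]
          ring
    _ = χ⁻¹ a * (gaussSum χ ψ * gaussSum (χ * η) ψ) := by
        rw [← mul_sum, mul_assoc]
        rfl

theorem sum_pow_orderOf_mul_kloostermanSum [IsDomain R] (ν η : MulChar F R) (ψ : AddChar F R)
    {a : F} (ha : a ≠ 0) :
    ∑ j, (ν ^ orderOf η) j * kloostermanSum η ψ 1 (a * j ^ orderOf η) =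
      ∑ n ∈ range (orderOf η), (ν * η ^ n)⁻¹ a *
        (gaussSum (ν * η ^ n) ψ * gaussSum (ν * η ^ (n + 1)) ψ) := by
  rw [sum_pow_orderOf_mul_comp_pow ν η fun t => kloostermanSum η ψ 1 (a * t)]
  refine sum_congr rfl fun n _ => ?_
  rw [sum_mul_kloostermanSum _ _ _ ha, mul_assoc ν, ← pow_succ]

theorem sum_range_zpow_sub_one {G M : Type*} [Group G] [AddCommMonoid M] (g : G) (f : G → M) :
    ∑ n ∈ range (orderOf g), f (g ^ ((n : ℤ) - 1)) = ∑ n ∈ range (orderOf g), f (g ^ n) := by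
  rcases hd : orderOf g with _ | d
  · rfl
  have hlast : g ^ d = g⁻¹ := eq_inv_of_mul_eq_one_left <| by
    rw [← pow_succ, ← hd, pow_orderOf_eq_one]
  rw [sum_range_succ', sum_range_succ _ d, hlast]
  simp only [Nat.cast_add, Nat.cast_one, add_sub_cancel_right, zpow_natCast, Nat.cast_zero,
    zero_sub, zpow_neg_one]

theorem sum_mul_gaussSum_zpow_sub_one [IsDomain R] (ν η : MulChar F R) (ψ : AddChar F R)
    {a : F} (ha : a ≠ 0) :
    ∑ n ∈ range (orderOf η), (ν⁻¹ * η⁻¹ ^ n) a *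
        (gaussSum (ν * η ^ ((n : ℤ) - 1)) ψ * gaussSum (ν * η ^ (n : ℤ)) ψ) =
      η⁻¹ a * ∑ j, (ν ^ orderOf η) j * kloostermanSum η ψ 1 (a * j ^ orderOf η) := by
  have hshift := sum_range_zpow_sub_one η fun g =>
    (ν * g)⁻¹ a * (gaussSum (ν * g) ψ * gaussSum (ν * (g * η)) ψ)
  simp only [← pow_succ, ← zpow_add_one, sub_add_cancel] at hshift
  rw [sum_pow_orderOf_mul_kloostermanSum ν η ψ ha, ← hshift, mul_sum]
  refine sum_congr rfl fun n _ => ?_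
  have hchar : ν⁻¹ * η⁻¹ ^ n = η⁻¹ * (ν * η ^ ((n : ℤ) - 1))⁻¹ := by
    rw [zpow_sub_one, zpow_natCast, mul_inv, mul_inv, inv_inv, inv_pow, mul_comm η⁻¹, mul_assoc,
      mul_inv_cancel_right]
  rw [hchar, MulChar.mul_apply, mul_assoc]

end MellinTransform

section KatzIdentity

variable {F : Type} [Field F] [Fintype F] [DecidableEq F]

theorem card_mul_Pkatz_eq {ψ : AddChar F ℂ} (hψ : ψ ≠ 1) {A₄ : MulChar F ℂ} (hA₄ : orderOf A₄ = 4)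
    {a j : F} (ha : a ≠ 0) (hj : j ≠ 0) (k : F) :
    Fintype.card F * Pkatz ψ A₄ a j k =
      ∑ y, (A₄ ^ 2) y * kloostermanSum 1 ψ 1 (a * (((j + k) ^ 2 - y) * ((j - k) ^ 2 + y))) +
        if j ^ 4 = k ^ 4 then (Fintype.card F : ℂ) else 0 := by
  have hφ := orderOf_sq_eq_two hA₄
  have hG : gaussSum (A₄ ^ 2) ψ ^ 2 = (Fintype.card F : ℂ) := by
    have hne : A₄ ^ 2 ≠ 1 := mt orderOf_eq_one_iff.2 (by omega)
    have hquadratic : (A₄ ^ 2).IsQuadratic :=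
      MulChar.isQuadratic_iff_sq_eq_one.2 (orderOf_dvd_iff_pow_eq_one.1 hφ.dvd)
    rw [gaussSum_sq hne hquadratic (AddChar.IsPrimitive.of_ne_one hψ), sq_apply_neg_one, one_mul]
  have hcancel (s : ℂ) : Fintype.card F * ((gaussSum (A₄ ^ 2) ψ)⁻¹ * s) =
      gaussSum (A₄ ^ 2) ψ * s := by
    have hG0 : gaussSum (A₄ ^ 2) ψ ≠ 0 := by
      intro h
      rw [h, zero_pow two_ne_zero] at hG
      exact Nat.cast_ne_zero.2 Fintype.card_ne_zero hG.symm
    rw [← hG]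
    field_simp
  rw [ite_pow_four_eq_pow_four hφ hj, add_left_comm, ← gaussSum_mul_sum_eq_add_ite hφ hψ ha,
    ← hcancel, Pkatz, sq_apply_neg_one, one_mul, mul_add, mul_add, mul_boole, mul_boole]

theorem Pkatz_eq_kloostermanSum_mul_kloostermanSum {ψ : AddChar F ℂ} (hψ : ψ ≠ 1)
    {A₄ : MulChar F ℂ} (hA₄ : orderOf A₄ = 4) {a j k : F} (ha : a ≠ 0) (hj : j ≠ 0) (hk : k ≠ 0) :
    Pkatz ψ A₄ a j k = A₄⁻¹ (-a) / Fintype.card F *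
      (kloostermanSum A₄ ψ 1 (a * j ^ 4) * kloostermanSum A₄ ψ 1 (a * k ^ 4)) := by
  have hAa : A₄⁻¹ (-a) * A₄ (-a) = 1 := by
    rw [← MulChar.mul_apply, inv_mul_cancel, MulChar.one_apply (neg_ne_zero.2 ha).isUnit]
  have hq : (Fintype.card F : ℂ) ≠ 0 := Nat.cast_ne_zero.2 Fintype.card_ne_zero
  rw [kloostermanSum_mul_kloostermanSum_of_orderOf_eq_four hA₄ hψ ha hj hk,
    ← card_mul_Pkatz_eq hψ hA₄ ha hj]
  field_simp
  linear_combination -(Pkatz ψ A₄ a j k) * hAa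

theorem Tmel2_eq_mul_sum_mul_sum {ψ : AddChar F ℂ} (hψ : ψ ≠ 1) {A₄ : MulChar F ℂ}
    (hA₄ : orderOf A₄ = 4) {a : F} (ha : a ≠ 0) (χ₁ χ₂ : MulChar F ℂ) :
    Tmel2 ψ A₄ a χ₁ χ₂ = A₄⁻¹ (-a) / Fintype.card F *
      ((∑ j, χ₁ j * kloostermanSum A₄ ψ 1 (a * j ^ 4)) *
        ∑ k, χ₂ k * kloostermanSum A₄ ψ 1 (a * k ^ 4)) := by
  rw [← sum_filter_ne_zero_mul χ₁, ← sum_filter_ne_zero_mul χ₂, sum_mul_sum, mul_sum, Tmel2]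
  refine sum_congr rfl fun j hj => ?_
  rw [mul_sum]
  refine sum_congr rfl fun k hk => ?_
  rw [Pkatz_eq_kloostermanSum_mul_kloostermanSum hψ hA₄ ha (mem_filter.1 hj).2 (mem_filter.1 hk).2]
  ring

end KatzIdentity

/-- Evaluation of `T(ν₁⁴, ν₂⁴)` in terms of Gauss sums. -/
theorem T2_eval_fourth_powers
    (F : Type) [Field F] [Fintype F] [DecidableEq F]
    (hq : Fintype.card F % 4 = 1)
    (ψ : AddChar F ℂ) (hψ : ψ ≠ 1)
    (A₄ : MulChar F ℂ) (hA₄ : orderOf A₄ = 4)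
    (a : F) (ha : a ≠ 0)
    (ν₁ ν₂ : MulChar F ℂ) :
    Tmel2 ψ A₄ a (ν₁ ^ 4) (ν₂ ^ 4) =
      A₄ (-a) / (Fintype.card F : ℂ) *
        ∑ m ∈ Finset.range 4, ∑ n ∈ Finset.range 4,
          ((ν₁ * ν₂)⁻¹ * (A₄⁻¹) ^ (m + n)) a *
            gaussSum (ν₁ * A₄ ^ ((n : ℤ) - 1)) ψ * gaussSum (ν₁ * A₄ ^ (n : ℤ)) ψ *
            gaussSum (ν₂ * A₄ ^ ((m : ℤ) - 1)) ψ * gaussSum (ν₂ * A₄ ^ (m : ℤ)) ψ := by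
  have hconst : A₄ (-a) * (A₄⁻¹ a * A₄⁻¹ a) = A₄⁻¹ (-a) := by
    rw [← map_mul, ← neg_mul_neg a a, map_mul, ← mul_assoc, ← MulChar.mul_apply, mul_inv_cancel,
      MulChar.one_apply (neg_ne_zero.2 ha).isUnit, one_mul]
  have hmellin (ν : MulChar F ℂ) := sum_mul_gaussSum_zpow_sub_one ν A₄ ψ ha
  simp only [hA₄] at hmellin
  have hsplit (m n : ℕ) : ((ν₁ * ν₂)⁻¹ * A₄⁻¹ ^ (m + n)) a =
      (ν₂⁻¹ * A₄⁻¹ ^ m) a * (ν₁⁻¹ * A₄⁻¹ ^ n) a := by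
    rw [← MulChar.mul_apply, mul_inv, pow_add, mul_comm ν₁⁻¹, mul_mul_mul_comm]
  calc Tmel2 ψ A₄ a (ν₁ ^ 4) (ν₂ ^ 4)
      = A₄ (-a) / Fintype.card F *
        ((A₄⁻¹ a * ∑ k, (ν₂ ^ 4) k * kloostermanSum A₄ ψ 1 (a * k ^ 4)) *
        (A₄⁻¹ a * ∑ j, (ν₁ ^ 4) j * kloostermanSum A₄ ψ 1 (a * j ^ 4))) := by
        rw [Tmel2_eq_mul_sum_mul_sum hψ hA₄ ha, ← hconst]
        ring
    _ = _ := by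
        rw [← hmellin, ← hmellin, sum_mul_sum]
        simp only [hsplit]
        refine congrArg _ (sum_congr rfl fun m _ => sum_congr rfl fun n _ => ?_)
        ring
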